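/- Let s ∈ (0,1), u ∈ C_c^∞(ℝⁿ), and let φ ∈ C²(ℝ) be convex with φ(0) = 0. Then for every x ∈ ℝⁿ, (−Δ)^s( φ∘u )(x) ≤ φ'(u(x)) · (−Δ)^s u(x) (the Córdoba–Córdoba inequality). -/

import Mathlib

open MeasureTheory Filter Set
open scoped Topology ENNReal NNReal

noncomputable section

/-- `ℝⁿ` with the Euclidean norm. -/
abbrev En (n : ℕ) := EuclideanSpace ℝ (Fin n)

/-- The normalizing constant `p(n,s) = Γ(n/2+s)/(π^{n/2} Γ(s))` of the Poisson kernel. -/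
def pns (n : ℕ) (s : ℝ) : ℝ :=
  Real.Gamma ((n : ℝ) / 2 + s) / (Real.pi ^ ((n : ℝ) / 2) * Real.Gamma s)

/-- The fractional Poisson kernel `P_z^{(s)}(x) = p(n,s) z^{2s} (|x|² + z²)^{-(n+2s)/2}`. -/
def Pker (n : ℕ) (s z : ℝ) (x : En n) : ℝ :=
  pns n s * z ^ (2 * s) * (‖x‖ ^ 2 + z ^ 2) ^ (-((n : ℝ) + 2 * s) / 2)

/-- Convolution with the fractional Poisson kernel in the first variable, at fixed `z`. -/
def Pconv (n : ℕ) (s z : ℝ) (f : En n → ℝ) (x : En n) : ℝ :=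
  ∫ y, Pker n s z (x - y) * f y

/-- The Caffarelli–Silvestre extension `U(x,z) = (P_z^{(s)} ∗ u)(x)`. -/
def CSext (n : ℕ) (s : ℝ) (u : En n → ℝ) (x : En n) (z : ℝ) : ℝ :=
  Pconv n s z u x

/-- The constant `C(n,s) = 4^s Γ(n/2+s) / (π^{n/2} |Γ(-s)|)`. -/
def Cns (n : ℕ) (s : ℝ) : ℝ :=
  4 ^ s * Real.Gamma ((n : ℝ) / 2 + s) / (Real.pi ^ ((n : ℝ) / 2) * |Real.Gamma (-s)|)

/-- The fractional Laplacian `(-Δ)^s w(x)` as a principal-value singular integral. -/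
def fracLap (n : ℕ) (s : ℝ) (w : En n → ℝ) (x : En n) : ℝ :=
  Cns n s * limUnder (𝓝[>] (0 : ℝ))
    (fun ε : ℝ => ∫ y in {y : En n | ε < ‖x - y‖}, (w x - w y) / ‖x - y‖ ^ ((n : ℝ) + 2 * s))

/-- `Λ^s w := -(-Δ)^s w`. -/
def Lam (n : ℕ) (s : ℝ) (w : En n → ℝ) (x : En n) : ℝ := - fracLap n s w x

/-- The first-order carré du champ `Γ₁(u,v) = ½(Λ^s(uv) - u Λ^s v - v Λ^s u)`. -/
def Gamma1 (n : ℕ) (s : ℝ) (u v : En n → ℝ) (x : En n) : ℝ :=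
  (Lam n s (fun y => u y * v y) x - u x * Lam n s v x - v x * Lam n s u x) / 2

/-- The constant `β_s = 2^{2s-1} Γ(s)/Γ(1-s)`. -/
def betaS (s : ℝ) : ℝ := 2 ^ (2 * s - 1) * Real.Gamma s / Real.Gamma (1 - s)

/-- Partial derivative in the `i`-th coordinate direction. -/
def pd {n : ℕ} (i : Fin n) (f : En n → ℝ) (x : En n) : ℝ :=
  fderiv ℝ f x (EuclideanSpace.single i 1)

/-- The Laplacian in the `x`-variables. -/
def lapX {n : ℕ} (f : En n → ℝ) (x : En n) : ℝ := ∑ i, pd i (pd i f) x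

/-- The degenerate operator `L_s W = div_{x,z}(z^{1-2s} ∇̃W)`, written out as
`z^{1-2s} Δ_x W + ∂_z(z^{1-2s} ∂_z W)`. -/
def LsOp {n : ℕ} (s : ℝ) (W : En n → ℝ → ℝ) (x : En n) (z : ℝ) : ℝ :=
  z ^ (1 - 2 * s) * lapX (fun y => W y z) x
    + deriv (fun t => t ^ (1 - 2 * s) * deriv (W x) t) z

/-!
The tangent line inequality `φ(a) - φ(b) ≤ φ'(a) (a - b)` for convex `φ`, applied with `a = u(x)`
and averaged over the reflected pairs `b = u(x ± z)`, is the asserted inequality for symmetric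
second differences. Folding the principal value along `y = x ± z` gives
`(-Δ)^s w(x) = (C(n,s) / 2) ∫ (2w(x) - w(x+z) - w(x-z)) / |z|^{n+2s} dz`,
an absolutely convergent integral once `w` is bounded and `C²` at `x`: the second difference is
then bounded, and `O(|z|²)` at the origin, so that `0 < s < 1` gives integrability at both ends.
-/

open Asymptotics Module

section SecondDifference

/-- The symmetric second difference of `w` at `x`, with the sign of `-Δ`: it is nonnegative at a
maximum of `w`. It is the numerator of the absolutely convergent form of the fractional
Laplacian. -/
def secondDiff {G : Type*} [AddGroup G] (w : G → ℝ) (x z : G) : ℝ := 2 * w x - w (x + z) - w (x - z)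

lemma norm_secondDiff_le {G : Type*} [AddGroup G] {w : G → ℝ} {M : ℝ} (hM : ∀ y, ‖w y‖ ≤ M)
    (x z : G) : ‖secondDiff w x z‖ ≤ 4 * M := by
  have hx := abs_le.1 (hM x)
  have hadd := abs_le.1 (hM (x + z))
  have hsub := abs_le.1 (hM (x - z))
  rw [secondDiff, Real.norm_eq_abs, abs_le]
  constructor <;> linarith

variable {E F : Type*} [NormedAddCommGroup E] [NormedSpace ℝ E] [NormedAddCommGroup F]
  [NormedSpace ℝ F]

lemma isBigO_sub_norm_sq_of_fderiv_eq_zero {f : E → F} {a : E} (hf : ContDiffAt ℝ 2 f a)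
    (hfa : fderiv ℝ f a = 0) : (fun x => f x - f a) =O[𝓝 a] fun x => ‖x - a‖ ^ 2 := by
  have hfderiv : fderiv ℝ f =O[𝓝 a] fun x => x - a := by
    have hdiff : DifferentiableAt ℝ (fderiv ℝ f) a :=
      (hf.fderiv_right (m := 1) le_rfl).differentiableAt one_ne_zero
    simpa only [hfa, sub_zero] using hdiff.hasFDerivAt.isBigO_sub
  obtain ⟨C, hC⟩ := hfderiv.bound
  obtain ⟨δ, hδ, hball⟩ := Metric.eventually_nhds_iff_ball.1
    (hC.and ((hf.eventually (by simp)).mono fun y hy => hy.differentiableAt two_ne_zero))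
  refine IsBigO.of_bound |C| ?_
  filter_upwards [Metric.ball_mem_nhds a hδ] with x hx
  have hsub : Metric.closedBall a ‖x - a‖ ⊆ Metric.ball a δ :=
    Metric.closedBall_subset_ball (mem_ball_iff_norm.1 hx)
  have hderiv : ∀ y ∈ Metric.closedBall a ‖x - a‖, ‖fderiv ℝ f y‖ ≤ |C| * ‖x - a‖ := fun y hy =>
    calc ‖fderiv ℝ f y‖ ≤ C * ‖y - a‖ := (hball y (hsub hy)).1
      _ ≤ |C| * ‖x - a‖ := by
        gcongr
        exacts [le_abs_self C, mem_closedBall_iff_norm.1 hy]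
  calc ‖f x - f a‖ ≤ |C| * ‖x - a‖ * ‖x - a‖ :=
        (convex_closedBall a ‖x - a‖).norm_image_sub_le_of_norm_fderiv_le
          (fun y hy => (hball y (hsub hy)).2) hderiv
          (Metric.mem_closedBall_self (norm_nonneg _)) (mem_closedBall_iff_norm.2 le_rfl)
    _ = |C| * ‖‖x - a‖ ^ 2‖ := by rw [norm_pow, norm_norm]; ring

lemma fderiv_secondDiff_zero {w : E → ℝ} {x : E} (hw : DifferentiableAt ℝ w x) :
    fderiv ℝ (secondDiff w x) 0 = 0 := by
  have hadd : HasFDerivAt (fun z => w (x + z)) (fderiv ℝ w x) 0 :=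
    (hasFDerivAt_comp_add_left x).2 (by rw [add_zero]; exact hw.hasFDerivAt)
  have hsub : HasFDerivAt (fun z => w (x - z)) (-fderiv ℝ w x) 0 := by
    have hid : HasFDerivAt (fun z : E => x - z) (-.id ℝ E) 0 := (hasFDerivAt_id 0).const_sub x
    have hw0 : HasFDerivAt w (fderiv ℝ w x) (x - 0) := by rw [sub_zero]; exact hw.hasFDerivAt
    exact (hw0.comp 0 hid).congr_fderiv (by simp)
  have hsecond : HasFDerivAt (secondDiff w x) (-fderiv ℝ w x - -fderiv ℝ w x) 0 :=
    (hadd.const_sub (2 * w x)).sub hsub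
  rw [hsecond.fderiv, sub_self]

lemma secondDiff_isBigO_norm_sq {w : E → ℝ} {x : E} (hw : ContDiffAt ℝ 2 w x) :
    secondDiff w x =O[𝓝 0] fun z => ‖z‖ ^ 2 := by
  have hsmooth : ContDiffAt ℝ 2 (secondDiff w x) 0 := by
    have hadd : ContDiffAt ℝ 2 w (x + 0) := by rwa [add_zero]
    have hsub : ContDiffAt ℝ 2 w (x - 0) := by rwa [sub_zero]
    exact (contDiffAt_const.sub (hadd.comp 0 (by fun_prop))).sub (hsub.comp 0 (by fun_prop))
  have hzero : secondDiff w x 0 = 0 := by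
    rw [secondDiff, add_zero, sub_zero, two_mul, add_sub_cancel_right, sub_self]
  simpa only [hzero, sub_zero] using isBigO_sub_norm_sq_of_fderiv_eq_zero hsmooth
    (fderiv_secondDiff_zero (hw.differentiableAt two_ne_zero))

end SecondDifference

lemma sub_le_deriv_mul_sub_of_convexOn {S : Set ℝ} {φ : ℝ → ℝ} {a b : ℝ} (hφ : ConvexOn ℝ S φ)
    (ha : a ∈ S) (hb : b ∈ S) (hd : DifferentiableAt ℝ φ a) :
    φ a - φ b ≤ deriv φ a * (a - b) := by
  rcases lt_trichotomy a b with hab | rfl | hba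
  · have hslope := hφ.deriv_le_slope ha hb hab hd
    rw [slope_def_field, le_div_iff₀ (sub_pos.2 hab)] at hslope
    linarith
  · simp
  · have hslope := hφ.slope_le_deriv hb ha hba hd
    rwa [slope_def_field, div_le_iff₀ (sub_pos.2 hba)] at hslope

lemma secondDiff_comp_le_deriv_mul {G : Type*} [AddGroup G] {φ : ℝ → ℝ} {u : G → ℝ} {x : G}
    (hφconv : ConvexOn ℝ univ φ) (hφ : DifferentiableAt ℝ φ (u x)) (z : G) :
    secondDiff (fun y => φ (u y)) x z ≤ deriv φ (u x) * secondDiff u x z := by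
  have htangent (y : G) : φ (u x) - φ (u y) ≤ deriv φ (u x) * (u x - u y) :=
    sub_le_deriv_mul_sub_of_convexOn hφconv (mem_univ _) (mem_univ _) hφ
  calc secondDiff (fun y => φ (u y)) x z
      = (φ (u x) - φ (u (x + z))) + (φ (u x) - φ (u (x - z))) := by rw [secondDiff]; ring
    _ ≤ deriv φ (u x) * (u x - u (x + z)) + deriv φ (u x) * (u x - u (x - z)) :=
        add_le_add (htangent _) (htangent _)
    _ = deriv φ (u x) * secondDiff u x z := by rw [secondDiff]; ring

section SingularIntegral

lemma rpow_neg_le_one_add_rpow_neg {ε r p : ℝ} (hε : 0 < ε) (hr : ε < r) (hp : 0 ≤ p) :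
    r ^ (-p) ≤ (ε⁻¹ + 1) ^ p * (1 + r) ^ (-p) := by
  have hr0 : 0 < r := hε.trans hr
  have hle : 1 + r ≤ (ε⁻¹ + 1) * r := by
    have hone : 1 ≤ ε⁻¹ * r := by rw [inv_mul_eq_div]; exact (one_le_div hε).2 hr.le
    linarith
  rw [Real.rpow_neg hr0.le, Real.rpow_neg (by positivity), ← div_eq_mul_inv, inv_eq_one_div,
    div_le_div_iff₀ (by positivity) (by positivity), one_mul,
    ← Real.mul_rpow (by positivity) hr0.le]
  gcongr

lemma tendsto_setIntegral_lt_norm {E F : Type*} [NormedAddCommGroup E] [MeasurableSpace E]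
    [OpensMeasurableSpace E] [NormedAddCommGroup F] [NormedSpace ℝ F] {μ : Measure E}
    [NullSingletonClass μ] {g : E → F} (hg : Integrable g μ) :
    Tendsto (fun ε : ℝ => ∫ z in {z | ε < ‖z‖}, g z ∂μ) (𝓝[>] 0) (𝓝 (∫ z, g z ∂μ)) := by
  refine AECover.integral_tendsto_of_countably_generated ⟨?_, fun ε =>
    measurableSet_lt measurable_const measurable_norm⟩ hg
  filter_upwards [compl_mem_ae_iff.2 (measure_singleton (μ := μ) (0 : E))] with z hz
  exact (eventually_lt_nhds (norm_pos_iff.2 hz)).filter_mono nhdsWithin_le_nhds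

variable {E : Type*} [NormedAddCommGroup E] [NormedSpace ℝ E] [FiniteDimensional ℝ E]
  [MeasurableSpace E] [BorelSpace E] {μ : Measure E} [μ.IsAddHaarMeasure] {p M : ℝ}

lemma integrableOn_lt_norm_div_norm_rpow (hp : finrank ℝ E < p) {g : E → ℝ}
    (hg : AEStronglyMeasurable g μ) (hM : ∀ z, ‖g z‖ ≤ M) {ε : ℝ} (hε : 0 < ε) :
    IntegrableOn (fun z => g z / ‖z‖ ^ p) {z | ε < ‖z‖} μ := by
  have hp0 : 0 ≤ p := (Nat.cast_nonneg _).trans hp.le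
  have hM0 : 0 ≤ M := (norm_nonneg _).trans (hM 0)
  have hmeas : AEStronglyMeasurable (fun z => g z / ‖z‖ ^ p) μ :=
    hg.div₀ (measurable_norm.pow_const p).aestronglyMeasurable
  refine ((integrable_one_add_norm hp).const_mul (M * (ε⁻¹ + 1) ^ p)).integrableOn.mono'
    hmeas.restrict ?_
  filter_upwards [ae_restrict_mem (measurableSet_lt measurable_const measurable_norm)] with z hz
  calc ‖g z / ‖z‖ ^ p‖ = ‖g z‖ * ‖z‖ ^ (-p) := by
        rw [norm_div, Real.norm_of_nonneg (by positivity : 0 ≤ ‖z‖ ^ p),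
          Real.rpow_neg (norm_nonneg z), div_eq_mul_inv]
    _ ≤ M * ((ε⁻¹ + 1) ^ p * (1 + ‖z‖) ^ (-p)) := by
        gcongr
        exacts [hM z, rpow_neg_le_one_add_rpow_neg hε hz hp0]
    _ = M * (ε⁻¹ + 1) ^ p * (1 + ‖z‖) ^ (-p) := by ring

lemma integrableOn_ball_div_norm_rpow [Nontrivial E] {C α δ : ℝ}
    (hpα : p < finrank ℝ E + α) {g : E → ℝ} (hg : AEStronglyMeasurable g μ)
    (hC : ∀ z ∈ Metric.ball 0 δ, ‖g z‖ ≤ C * ‖z‖ ^ α) :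
    IntegrableOn (fun z => g z / ‖z‖ ^ p) (Metric.ball 0 δ) μ := by
  refine integrableOn_ball_of_norm_le_rpow (C := C) (α := p - α) finrank_pos (by linarith) ?_
    (hg.div₀ (measurable_norm.pow_const p).aestronglyMeasurable)
  filter_upwards [ae_restrict_mem Metric.isOpen_ball.measurableSet,
    ae_restrict_of_ae (compl_mem_ae_iff.2 (measure_singleton (μ := μ) (0 : E)))] with z hz hz0
  have hpos : 0 < ‖z‖ := norm_pos_iff.2 hz0
  rw [norm_div, Real.norm_of_nonneg (by positivity : 0 ≤ ‖z‖ ^ p), neg_sub, Real.rpow_sub hpos,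
    ← mul_div_assoc]
  gcongr
  exact hC z hz

lemma integrable_div_norm_rpow [Nontrivial E] {α : ℝ} (hp : finrank ℝ E < p)
    (hpα : p < finrank ℝ E + α) {g : E → ℝ} (hg : AEStronglyMeasurable g μ)
    (hM : ∀ z, ‖g z‖ ≤ M) (hg0 : g =O[𝓝 0] fun z => ‖z‖ ^ α) :
    Integrable (fun z => g z / ‖z‖ ^ p) μ := by
  obtain ⟨C, hC⟩ := hg0.bound
  obtain ⟨δ, hδ, hball⟩ := Metric.eventually_nhds_iff_ball.1 hC
  have hnear : IntegrableOn (fun z => g z / ‖z‖ ^ p) (Metric.ball 0 δ) μ :=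
    integrableOn_ball_div_norm_rpow hpα hg fun z hz => by
      simpa only [Real.norm_of_nonneg (Real.rpow_nonneg (norm_nonneg z) α)] using hball z hz
  have hfar : IntegrableOn (fun z => g z / ‖z‖ ^ p) {z | δ / 2 < ‖z‖} μ :=
    integrableOn_lt_norm_div_norm_rpow hp hg hM (half_pos hδ)
  rw [← integrableOn_univ]
  refine (hnear.union hfar).mono_set fun z _ => ?_
  rcases lt_or_ge ‖z‖ δ with hz | hz
  · exact .inl (mem_ball_zero_iff.2 hz)
  · exact .inr ((half_lt_self hδ).trans_le hz)

lemma aestronglyMeasurable_secondDiff {w : E → ℝ} (hw : AEStronglyMeasurable w μ) (x : E) :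
    AEStronglyMeasurable (secondDiff w x) μ :=
  (aestronglyMeasurable_const.sub (hw.comp_measurePreserving (measurePreserving_add_left μ x))).sub
    (hw.comp_measurePreserving (μ.measurePreserving_sub_left x))

lemma integrable_secondDiff_div_norm_rpow [Nontrivial E] {w : E → ℝ} {x : E}
    (hp : finrank ℝ E < p) (hp2 : p < finrank ℝ E + 2) (hw : AEStronglyMeasurable w μ)
    (hM : ∀ y, ‖w y‖ ≤ M) (hwx : ContDiffAt ℝ 2 w x) :
    Integrable (fun z => secondDiff w x z / ‖z‖ ^ p) μ :=
  integrable_div_norm_rpow hp hp2 (aestronglyMeasurable_secondDiff hw x)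
    (norm_secondDiff_le hM x)
    (by simpa only [Real.rpow_two] using secondDiff_isBigO_norm_sq hwx)

lemma setIntegral_sub_div_norm_rpow_eq_half_secondDiff (hp : finrank ℝ E < p) {w : E → ℝ}
    (hw : AEStronglyMeasurable w μ) (hM : ∀ y, ‖w y‖ ≤ M) (x : E) {ε : ℝ} (hε : 0 < ε) :
    ∫ y in {y | ε < ‖x - y‖}, (w x - w y) / ‖x - y‖ ^ p ∂μ =
      (∫ z in {z | ε < ‖z‖}, secondDiff w x z / ‖z‖ ^ p ∂μ) / 2 := by
  have hshift_add := measurePreserving_add_left μ x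
  have hshift_sub := μ.measurePreserving_sub_left x
  have hadd : ∫ z in {z | ε < ‖z‖}, (w x - w (x + z)) / ‖z‖ ^ p ∂μ =
      ∫ y in {y | ε < ‖x - y‖}, (w x - w y) / ‖x - y‖ ^ p ∂μ := by
    simpa using hshift_add.setIntegral_preimage_emb (measurableEmbedding_addLeft x)
      (fun y => (w x - w y) / ‖x - y‖ ^ p) {y | ε < ‖x - y‖}
  have hsub : ∫ z in {z | ε < ‖z‖}, (w x - w (x - z)) / ‖z‖ ^ p ∂μ =
      ∫ y in {y | ε < ‖x - y‖}, (w x - w y) / ‖x - y‖ ^ p ∂μ := by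
    simpa using hshift_sub.setIntegral_preimage_emb (measurableEmbedding_subLeft x)
      (fun y => (w x - w y) / ‖x - y‖ ^ p) {y | ε < ‖x - y‖}
  have hint {v : E → E} (hv : MeasurePreserving v μ μ) :
      IntegrableOn (fun z => (w x - w (v z)) / ‖z‖ ^ p) {z | ε < ‖z‖} μ :=
    integrableOn_lt_norm_div_norm_rpow hp
      (aestronglyMeasurable_const.sub (hw.comp_measurePreserving hv))
      (fun z => norm_sub_le_of_le (hM x) (hM (v z))) hε
  have hsum (z : E) : secondDiff w x z / ‖z‖ ^ p =
      (w x - w (x + z)) / ‖z‖ ^ p + (w x - w (x - z)) / ‖z‖ ^ p := by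
    rw [secondDiff]; ring
  simp_rw [hsum]
  rw [integral_add (hint hshift_add) (hint hshift_sub), hadd, hsub, add_self_div_two]

lemma tendsto_truncated_setIntegral_sub_div_norm_rpow [Nontrivial E] {w : E → ℝ} {x : E}
    (hp : finrank ℝ E < p) (hp2 : p < finrank ℝ E + 2) (hw : AEStronglyMeasurable w μ)
    (hM : ∀ y, ‖w y‖ ≤ M) (hwx : ContDiffAt ℝ 2 w x) :
    Tendsto (fun ε : ℝ => ∫ y in {y | ε < ‖x - y‖}, (w x - w y) / ‖x - y‖ ^ p ∂μ) (𝓝[>] 0)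
      (𝓝 ((∫ z, secondDiff w x z / ‖z‖ ^ p ∂μ) / 2)) := by
  refine ((tendsto_setIntegral_lt_norm
    (integrable_secondDiff_div_norm_rpow hp hp2 hw hM hwx)).div_const 2).congr' ?_
  filter_upwards [self_mem_nhdsWithin] with ε hε
  exact (setIntegral_sub_div_norm_rpow_eq_half_secondDiff hp hw hM x hε).symm

end SingularIntegral

section FractionalLaplacian

variable {n : ℕ} {s M : ℝ} {x : En n}

lemma Cns_nonneg (n : ℕ) (hs : 0 ≤ s) : 0 ≤ Cns n s :=
  div_nonneg (mul_nonneg (by positivity) (Real.Gamma_nonneg_of_nonneg (by positivity)))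
    (by positivity)

lemma nontrivial_En (hn : 1 ≤ n) : Nontrivial (En n) :=
  nontrivial_of_finrank_pos (R := ℝ) (by rwa [finrank_euclideanSpace_fin])

lemma integrable_secondDiff_div_fracLap_kernel (hn : 1 ≤ n) (hs0 : 0 < s) (hs1 : s < 1)
    {w : En n → ℝ} (hw : AEStronglyMeasurable w) (hM : ∀ y, ‖w y‖ ≤ M)
    (hwx : ContDiffAt ℝ 2 w x) :
    Integrable fun z => secondDiff w x z / ‖z‖ ^ ((n : ℝ) + 2 * s) := by
  have := nontrivial_En hn
  exact integrable_secondDiff_div_norm_rpow (by rw [finrank_euclideanSpace_fin]; linarith)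
    (by rw [finrank_euclideanSpace_fin]; linarith) hw hM hwx

lemma fracLap_eq_integral_secondDiff (hn : 1 ≤ n) (hs0 : 0 < s) (hs1 : s < 1) {w : En n → ℝ}
    (hw : AEStronglyMeasurable w) (hM : ∀ y, ‖w y‖ ≤ M) (hwx : ContDiffAt ℝ 2 w x) :
    fracLap n s w x =
      Cns n s / 2 * ∫ z, secondDiff w x z / ‖z‖ ^ ((n : ℝ) + 2 * s) := by
  have := nontrivial_En hn
  rw [fracLap, (tendsto_truncated_setIntegral_sub_div_norm_rpow
    (by rw [finrank_euclideanSpace_fin]; linarith)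
    (by rw [finrank_euclideanSpace_fin]; linarith) hw hM hwx).limUnder_eq]
  ring

lemma exists_bound_comp_of_bounded {X : Type*} {φ : ℝ → ℝ} (hφ : Continuous φ) {u : X → ℝ}
    (hM : ∀ y, ‖u y‖ ≤ M) : ∃ N, ∀ y, ‖φ (u y)‖ ≤ N := by
  obtain ⟨N, hN⟩ := (isCompact_closedBall (0 : ℝ) M).exists_bound_of_continuousOn hφ.continuousOn
  exact ⟨N, fun y => hN _ (mem_closedBall_zero_iff.2 (hM y))⟩

theorem Cordoba_Cordoba_inequality_general (hn : 1 ≤ n) (hs0 : 0 < s) (hs1 : s < 1)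
    {u : En n → ℝ} (hu : AEStronglyMeasurable u) (hM : ∀ y, ‖u y‖ ≤ M)
    (hux : ContDiffAt ℝ 2 u x) {φ : ℝ → ℝ} (hφ : ContDiffAt ℝ 2 φ (u x))
    (hφconv : ConvexOn ℝ univ φ) :
    fracLap n s (fun y => φ (u y)) x ≤ deriv φ (u x) * fracLap n s u x := by
  have hφcont : Continuous φ := continuousOn_univ.1 (hφconv.continuousOn isOpen_univ)
  obtain ⟨N, hN⟩ := exists_bound_comp_of_bounded hφcont hM
  have hφu : AEStronglyMeasurable fun y => φ (u y) := hφcont.comp_aestronglyMeasurable hu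
  have hφux : ContDiffAt ℝ 2 (fun y => φ (u y)) x := hφ.comp x hux
  have hintegral : ∫ z, secondDiff (fun y => φ (u y)) x z / ‖z‖ ^ ((n : ℝ) + 2 * s) ≤
      deriv φ (u x) * ∫ z, secondDiff u x z / ‖z‖ ^ ((n : ℝ) + 2 * s) := by
    rw [← integral_const_mul]
    refine integral_mono (integrable_secondDiff_div_fracLap_kernel hn hs0 hs1 hφu hN hφux)
      ((integrable_secondDiff_div_fracLap_kernel hn hs0 hs1 hu hM hux).const_mul _) fun z => ?_
    rw [← mul_div_assoc]
    gcongr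
    exact secondDiff_comp_le_deriv_mul hφconv (hφ.differentiableAt two_ne_zero) z
  rw [fracLap_eq_integral_secondDiff hn hs0 hs1 hφu hN hφux,
    fracLap_eq_integral_secondDiff hn hs0 hs1 hu hM hux, mul_left_comm]
  exact mul_le_mul_of_nonneg_left hintegral (div_nonneg (Cns_nonneg n hs0.le) zero_le_two)

end FractionalLaplacian

/-- **Córdoba–Córdoba inequality** on `ℝⁿ`: for convex `φ ∈ C²(ℝ)` with `φ(0)=0` and
`u ∈ C_c^∞(ℝⁿ)`, one has `(-Δ)^s(φ∘u) ≤ φ'(u)·(-Δ)^s u` pointwise. -/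
theorem Cordoba_Cordoba_inequality (n : ℕ) (hn : 1 ≤ n) (s : ℝ) (hs0 : 0 < s) (hs1 : s < 1)
    (u : En n → ℝ) (hu : ContDiff ℝ (⊤ : ℕ∞) u) (huc : HasCompactSupport u)
    (φ : ℝ → ℝ) (hφ : ContDiff ℝ 2 φ) (hφconv : ConvexOn ℝ univ φ) (hφ0 : φ 0 = 0) :
    ∀ x : En n, fracLap n s (fun y => φ (u y)) x ≤ deriv φ (u x) * fracLap n s u x := by
  intro x
  obtain ⟨M, hM⟩ := huc.exists_bound_of_continuous hu.continuous
  exact Cordoba_Cordoba_inequality_general hn hs0 hs1 hu.continuous.aestronglyMeasurable hM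
    (hu.contDiffAt.of_le (by norm_cast)) hφ.contDiffAt hφconv
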